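/- arXiv:2502.16096 — 6 statements merged into one kernel-verified Lean document; each statement's English description precedes it below -/
import Mathlib

section
/- Let G and H be finite labeled graphs with V(H) ⊆ V(G). Then H is a labeled contraction of G if and only if there exists a witness structure of G into H. -/
/-!
A witness structure is the same thing as a retraction of `V(G)` onto `V(H)`: send each vertex
to the representative of its block.  `IsRetraction` records what such a map `f` has to satisfy.
Contracting an edge `uv` is itself governed by the map `fold u v` sending `v` to `u` and fixing
everything else, since two distinct vertices are adjacent in `G/(u,v)` exactly when some edge of
`G` folds onto them (`contract_adj_iff`).  Consequently, for `v ∉ V(H)`, a map `f` is a retraction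
of `G/(u,v)` into `H` iff `f ∘ fold u v` is a retraction of `G` into `H`
(`isRetraction_contract_iff`).

Both directions of the theorem follow.  Along a contraction sequence, compose the folds, starting
from the identity retraction of `H` into itself.  Conversely, let `f` be a retraction of `G` into
`H`.  If `V(G) = V(H)`, then `f` is the identity on the vertices and `G = H`.  Otherwise take
`v ∈ V(G) \ V(H)`; the first edge `vu` on a path from `v` to `f v` inside the fibre of `v` satisfies
`f u = f v`, so `f ∘ fold u v = f` is also a retraction of `G/(u,v)`, and induction on `|V(G)|`
applies.
-/

/-- A finite simple labeled graph: a finite vertex set together with a symmetric,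
irreflexive adjacency relation supported on the vertex set.  Two labeled graphs are
equal iff they have the same vertex set and the same edge set. -/
structure LGraph (α : Type) where
  verts : Finset α
  Adj : α → α → Prop
  symm : ∀ {u v}, Adj u v → Adj v u
  loopless : ∀ u, ¬ Adj u u
  mem_of_adj : ∀ {u v}, Adj u v → u ∈ verts ∧ v ∈ verts

namespace LGraph

variable {α : Type}

/-- Build a labeled graph from a vertex set and an arbitrary relation
(which gets symmetrized, made irreflexive and restricted to the vertex set). -/
def mk' (vs : Finset α) (r : α → α → Prop) : LGraph α where
  verts := vs
  Adj x y := x ≠ y ∧ x ∈ vs ∧ y ∈ vs ∧ (r x y ∨ r y x)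
  symm := by
    rintro u v ⟨hne, hu, hv, hr⟩
    exact ⟨hne.symm, hv, hu, hr.symm⟩
  loopless := by
    rintro u ⟨hne, -⟩
    exact hne rfl
  mem_of_adj := by
    rintro u v ⟨-, hu, hv, -⟩
    exact ⟨hu, hv⟩

variable [DecidableEq α]

/-- The labeled contraction `G/(u,v)`: add an edge between `u` and every vertex of
`N_G(v) \ N_G[u]`, then delete `v` and all its incident edges. -/
def contract (G : LGraph α) (u v : α) : LGraph α where
  verts := G.verts.erase v
  Adj x y := x ≠ y ∧ x ∈ G.verts.erase v ∧ y ∈ G.verts.erase v ∧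
    (G.Adj x y ∨ (x = u ∧ G.Adj v y) ∨ (y = u ∧ G.Adj v x))
  symm := by
    rintro a b ⟨hne, ha, hb, h⟩
    refine ⟨hne.symm, hb, ha, ?_⟩
    rcases h with h | h | h
    · exact Or.inl (G.symm h)
    · exact Or.inr (Or.inr h)
    · exact Or.inr (Or.inl h)
  loopless := by
    rintro a ⟨hne, -⟩
    exact hne rfl
  mem_of_adj := by
    rintro a b ⟨-, ha, hb, -⟩
    exact ⟨ha, hb⟩

/-- The result `G/S` of applying a list of labeled contractions successively. -/
def contractSeq : LGraph α → List (α × α) → LGraph α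
  | G, [] => G
  | G, (u, v) :: S => (G.contract u v).contractSeq S

/-- A list of pairs is a valid labeled contraction sequence on `G` if each pair is an
edge of the current graph when it is contracted. -/
def ValidSeq : LGraph α → List (α × α) → Prop
  | _, [] => True
  | G, (u, v) :: S => G.Adj u v ∧ (G.contract u v).ValidSeq S

/-- `H` is a labeled contraction of `G` if `G/S = H` for some labeled
contraction sequence `S` on `G`. -/
def IsContractionOf (H G : LGraph α) : Prop :=
  ∃ S : List (α × α), G.ValidSeq S ∧ G.contractSeq S = H

/-- Reachability inside a set `W` of vertices, using only edges of `G` with both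
endpoints in `W`. -/
def ReachIn (G : LGraph α) (W : Finset α) (x y : α) : Prop :=
  Relation.ReflTransGen (fun a b => a ∈ W ∧ b ∈ W ∧ G.Adj a b) x y

/-- A witness structure of `G` into `H`: a partition of `V(G)` into `|V(H)|` nonempty
sets, each inducing a connected subgraph of `G` and containing exactly one vertex of
`H` (its representative), such that two distinct vertices `u, v` of `H` are adjacent
in `H` iff the sets containing them are adjacent in `G`. -/
structure IsWitnessStructure (G H : LGraph α) (W : Finset (Finset α)) : Prop where
  subset_verts : ∀ Wi ∈ W, Wi ⊆ G.verts
  nonempty : ∀ Wi ∈ W, Wi.Nonempty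
  covers : ∀ x ∈ G.verts, ∃! Wi, Wi ∈ W ∧ x ∈ Wi
  card_eq : W.card = H.verts.card
  connected : ∀ Wi ∈ W, ∀ x ∈ Wi, ∀ y ∈ Wi, G.ReachIn Wi x y
  unique_rep : ∀ Wi ∈ W, ∃! h, h ∈ H.verts ∧ h ∈ Wi
  adj_iff : ∀ u ∈ H.verts, ∀ v ∈ H.verts, u ≠ v → ∀ Wu ∈ W, ∀ Wv ∈ W,
    u ∈ Wu → v ∈ Wv → (H.Adj u v ↔ ∃ x ∈ Wu, ∃ y ∈ Wv, G.Adj x y)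

/-- The degree of `x` inside the induced subgraph on `S`. -/
noncomputable def degreeIn (G : LGraph α) (S : Finset α) (x : α) : ℕ :=
  Set.ncard {y | y ∈ S ∧ G.Adj x y}

/-- `G` is `d`-degenerate: every nonempty (induced) subgraph has a vertex of degree
at most `d`. -/
def DegenLE (G : LGraph α) (d : ℕ) : Prop :=
  ∀ S : Finset α, S ⊆ G.verts → S.Nonempty → ∃ x ∈ S, G.degreeIn S x ≤ d

/-- The degeneracy `δ(G)`: the smallest `d` such that every nonempty subgraph of `G`
has a vertex of degree at most `d`. -/
noncomputable def degeneracy (G : LGraph α) : ℕ := sInf {d | G.DegenLE d}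

/-- The degree of a vertex. -/
noncomputable def degree (G : LGraph α) (x : α) : ℕ := Set.ncard {y | G.Adj x y}

/-- The maximum degree `Δ(G)`. -/
noncomputable def maxDegree (G : LGraph α) : ℕ := G.verts.sup fun x => G.degree x

/-- The union `G ∪ H`: vertex set `V(G) ∪ V(H)` and edge set `E(G) ∪ E(H)`. -/
def union (G H : LGraph α) : LGraph α where
  verts := G.verts ∪ H.verts
  Adj x y := G.Adj x y ∨ H.Adj x y
  symm := by
    rintro u v (h | h)
    · exact Or.inl (G.symm h)
    · exact Or.inr (H.symm h)
  loopless := by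
    rintro u (h | h)
    · exact G.loopless u h
    · exact H.loopless u h
  mem_of_adj := by
    rintro u v (h | h)
    · exact ⟨Finset.mem_union_left _ (G.mem_of_adj h).1,
        Finset.mem_union_left _ (G.mem_of_adj h).2⟩
    · exact ⟨Finset.mem_union_right _ (H.mem_of_adj h).1,
        Finset.mem_union_right _ (H.mem_of_adj h).2⟩

/-- A tree decomposition of the labeled graph `G`: a tree `T` with a bag
`X_t ⊆ V(G)` for each node `t`, covering all vertices and edges, such that for every
vertex the set of nodes whose bags contain it is connected in `T`. -/
structure TreeDecomp (G : LGraph α) (ι : Type) where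
  T : SimpleGraph ι
  isTree : T.IsTree
  bag : ι → Finset α
  bag_subset : ∀ t, bag t ⊆ G.verts
  covers_vert : ∀ x ∈ G.verts, ∃ t, x ∈ bag t
  covers_edge : ∀ {u v}, G.Adj u v → ∃ t, u ∈ bag t ∧ v ∈ bag t
  coherent : ∀ (x : α) {t₁ t₂ : ι} (p : T.Walk t₁ t₂), p.IsPath →
    x ∈ bag t₁ → x ∈ bag t₂ → ∀ t ∈ p.support, x ∈ bag t

/-- `G` has a tree decomposition of width at most `w`. -/
def TreewidthLE (G : LGraph α) (w : ℕ) : Prop :=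
  ∃ (ι : Type) (D : G.TreeDecomp ι), ∀ t, (D.bag t).card ≤ w + 1

/-- The treewidth of `G`: the minimum width of a tree decomposition of `G`. -/
noncomputable def treewidth (G : LGraph α) : ℕ := sInf {w | G.TreewidthLE w}

end LGraph

namespace LGraph

variable {α : Type}

/-! ### Retractions onto `H` -/

theorem ext_of_adj {G H : LGraph α} (hv : G.verts = H.verts)
    (ha : ∀ x y, G.Adj x y ↔ H.Adj x y) : G = H := by
  obtain ⟨V, A, _, _, _⟩ := G
  obtain ⟨V', A', _, _, _⟩ := H
  obtain rfl : V = V' := hv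
  obtain rfl : A = A' := funext fun x => funext fun y => propext (ha x y)
  rfl

/-- `f` retracts `G` onto `V(H)` with connected fibres (each vertex is joined to its image
by a path of `G` inside its fibre), and the edges of `H` are the images of the edges of `G`
between distinct fibres.  Values of `f` off `V(G)` are irrelevant. -/
structure IsRetraction (G H : LGraph α) (f : α → α) : Prop where
  subset : H.verts ⊆ G.verts
  maps : ∀ x ∈ G.verts, f x ∈ H.verts
  fix : ∀ h ∈ H.verts, f h = h
  reach : ∀ x ∈ G.verts,
    Relation.ReflTransGen (fun a b => f a = f b ∧ G.Adj a b) x (f x)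
  adj : ∀ p q, H.Adj p q ↔ p ≠ q ∧ ∃ x y, G.Adj x y ∧ f x = p ∧ f y = q

theorem isRetraction_id (G : LGraph α) : G.IsRetraction G id where
  subset := Finset.Subset.refl _
  maps _ h := h
  fix _ _ := rfl
  reach _ _ := .refl
  adj p q := by
    constructor
    · intro h
      exact ⟨fun e => G.loopless q (e ▸ h), p, q, h, rfl, rfl⟩
    · rintro ⟨-, x, y, h, rfl, rfl⟩
      exact h

theorem IsRetraction.eq_of_verts_eq {G H : LGraph α} {f : α → α} (hf : G.IsRetraction H f)
    (hv : G.verts = H.verts) : G = H := by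
  refine ext_of_adj hv fun p q => ?_
  have hfix : ∀ x ∈ G.verts, f x = x := fun x hx => hf.fix x (hv ▸ hx)
  rw [hf.adj]
  constructor
  · intro h
    have := G.mem_of_adj h
    exact ⟨fun e => G.loopless q (e ▸ h), p, q, h, hfix _ this.1, hfix _ this.2⟩
  · rintro ⟨-, x, y, h, rfl, rfl⟩
    have := G.mem_of_adj h
    rwa [hfix _ this.1, hfix _ this.2]

/-! ### From witness structures to retractions -/

/-- Sending each vertex to the representative of its block is a retraction. -/
theorem IsWitnessStructure.exists_isRetraction {G H : LGraph α} {W : Finset (Finset α)}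
    (hW : G.IsWitnessStructure H W) (hsub : H.verts ⊆ G.verts) :
    ∃ f, G.IsRetraction H f := by
  have hex : ∀ x ∈ G.verts, ∃ r Wi, Wi ∈ W ∧ x ∈ Wi ∧ r ∈ H.verts ∧ r ∈ Wi := by
    intro x hx
    obtain ⟨Wi, ⟨hWi, hxi⟩, -⟩ := hW.covers x hx
    obtain ⟨r, ⟨hr, hri⟩, -⟩ := hW.unique_rep Wi hWi
    exact ⟨r, Wi, hWi, hxi, hr, hri⟩
  choose! f B hBW hxB hfH hfB using hex
  have hrep : ∀ Wi ∈ W, ∀ x ∈ Wi, ∀ h ∈ H.verts, h ∈ Wi → f x = h := by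
    intro Wi hWi x hx h hh hhi
    have hxG := hW.subset_verts Wi hWi hx
    have hB : B x = Wi := (hW.covers x hxG).unique ⟨hBW x hxG, hxB x hxG⟩ ⟨hWi, hx⟩
    exact (hW.unique_rep Wi hWi).unique ⟨hfH x hxG, hB ▸ hfB x hxG⟩ ⟨hh, hhi⟩
  refine ⟨f, hsub, hfH, fun h hh => ?_, fun x hx => ?_, fun p q => ?_⟩
  · have hhG := hsub hh
    exact hrep _ (hBW h hhG) h (hxB h hhG) h hh (hxB h hhG)
  · refine Relation.ReflTransGen.mono ?_ _ _
      (hW.connected _ (hBW x hx) x (hxB x hx) (f x) (hfB x hx))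
    rintro a b ⟨ha, hb, hab⟩
    refine ⟨?_, hab⟩
    rw [hrep _ (hBW x hx) a ha _ (hfH x hx) (hfB x hx),
      hrep _ (hBW x hx) b hb _ (hfH x hx) (hfB x hx)]
  · constructor
    · intro h
      obtain ⟨hp, hq⟩ := H.mem_of_adj h
      have hpq : p ≠ q := fun e => H.loopless q (e ▸ h)
      have hpG := hsub hp
      have hqG := hsub hq
      obtain ⟨x, hx, y, hy, hxy⟩ := (hW.adj_iff p hp q hq hpq _ (hBW p hpG) _ (hBW q hqG)
        (hxB p hpG) (hxB q hqG)).1 h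
      exact ⟨hpq, x, y, hxy, hrep _ (hBW p hpG) x hx p hp (hxB p hpG),
        hrep _ (hBW q hqG) y hy q hq (hxB q hqG)⟩
    · rintro ⟨hpq, x, y, hxy, rfl, rfl⟩
      obtain ⟨hx, hy⟩ := G.mem_of_adj hxy
      exact (hW.adj_iff _ (hfH x hx) _ (hfH y hy) hpq _ (hBW x hx) _ (hBW y hy)
        (hfB x hx) (hfB y hy)).2 ⟨x, hxB x hx, y, hxB y hy, hxy⟩

variable [DecidableEq α]

/-! ### Retractions and contractions -/

/-- The vertex map underlying the contraction `G/(u,v)`. -/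
def fold (u v x : α) : α := if x = v then u else x

theorem contract_adj_iff {G : LGraph α} {u v : α} (huv : G.Adj u v) (a b : α) :
    (G.contract u v).Adj a b ↔
      a ≠ b ∧ ∃ x y, G.Adj x y ∧ fold u v x = a ∧ fold u v y = b := by
  have hne : u ≠ v := fun e => G.loopless v (e ▸ huv)
  have hu := (G.mem_of_adj huv).1
  constructor
  · rintro ⟨hab, ha, hb, h⟩
    have ha' := Finset.ne_of_mem_erase ha
    have hb' := Finset.ne_of_mem_erase hb
    refine ⟨hab, ?_⟩
    rcases h with h | ⟨rfl, h⟩ | ⟨rfl, h⟩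
    · exact ⟨a, b, h, by simp [fold, ha'], by simp [fold, hb']⟩
    · exact ⟨v, b, h, by simp [fold], by simp [fold, hb']⟩
    · exact ⟨a, v, G.symm h, by simp [fold, ha'], by simp [fold]⟩
  · rintro ⟨hab, x, y, h, rfl, rfl⟩
    have hx := (G.mem_of_adj h).1
    have hy := (G.mem_of_adj h).2
    have hs := G.symm h
    by_cases h1 : x = v <;> by_cases h2 : y = v <;>
      simp_all [fold, contract]

theorem isRetraction_contract_iff {G H : LGraph α} {u v : α} (huv : G.Adj u v)
    (hv : v ∉ H.verts) (f : α → α) :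
    (G.contract u v).IsRetraction H f ↔ G.IsRetraction H (fun x => f (fold u v x)) := by
  have hne : u ≠ v := fun e => G.loopless v (e ▸ huv)
  have hu := (G.mem_of_adj huv).1
  have hfold : ∀ x, x ≠ v → fold u v x = x := fun x hx => by simp [fold, hx]
  have hfv : fold u v v = u := by simp [fold]
  have hfu : fold u v u = u := hfold u hne
  have hverts : ∀ x, x ∈ (G.contract u v).verts ↔ x ≠ v ∧ x ∈ G.verts := fun x =>
    Finset.mem_erase
  have hmem : ∀ x ∈ G.verts, fold u v x ∈ (G.contract u v).verts := by
    intro x hx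
    rw [hverts]
    by_cases h : x = v
    · subst h; rw [hfv]; exact ⟨hne, hu⟩
    · rw [hfold x h]; exact ⟨h, hx⟩
  have hHv : ∀ h ∈ H.verts, h ≠ v := fun h hh e => hv (e ▸ hh)
  -- The images of edges between distinct fibres agree for the two maps.
  have hadj : ∀ p q, (p ≠ q ∧ ∃ x y, (G.contract u v).Adj x y ∧ f x = p ∧ f y = q) ↔
      (p ≠ q ∧ ∃ x y, G.Adj x y ∧ f (fold u v x) = p ∧ f (fold u v y) = q) := by
    intro p q
    refine and_congr_right fun hpq => ?_
    constructor
    · rintro ⟨a, b, h, rfl, rfl⟩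
      obtain ⟨-, x, y, hxy, rfl, rfl⟩ := (contract_adj_iff huv a b).1 h
      exact ⟨x, y, hxy, rfl, rfl⟩
    · rintro ⟨x, y, h, rfl, rfl⟩
      exact ⟨_, _, (contract_adj_iff huv _ _).2 ⟨fun e => hpq (by rw [e]), x, y, h, rfl, rfl⟩,
        rfl, rfl⟩
  constructor
  · intro hf
    refine ⟨fun h hh => ((hverts h).1 (hf.subset hh)).2, fun x hx => hf.maps _ (hmem x hx),
      fun h hh => ?_, fun x hx => ?_, fun p q => (hf.adj p q).trans (hadj p q)⟩
    · rw [hfold h (hHv h hh)]; exact hf.fix h hh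
    · have hlift := Relation.ReflTransGen.trans_induction_on
        (motive := fun {a b} _ => Relation.ReflTransGen
          (fun a b => f (fold u v a) = f (fold u v b) ∧ G.Adj a b) a b)
        (hf.reach _ (hmem x hx)) (fun _ => .refl) ?_ (fun _ _ h1 h2 => h1.trans h2)
      · by_cases h : x = v
        · subst h
          simp only [hfv] at hlift ⊢
          exact .head ⟨by rw [hfv, hfu], G.symm huv⟩ hlift
        · rw [hfold x h] at hlift
          simpa only [hfold x h] using hlift
      -- An edge at `u` created by the contraction lifts to a path of length two through `v`.
      · rintro a b ⟨hab, -, ha, hb, h⟩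
        have ha' := hfold a (Finset.ne_of_mem_erase ha)
        have hb' := hfold b (Finset.ne_of_mem_erase hb)
        rcases h with h | ⟨rfl, h⟩ | ⟨rfl, h⟩
        · exact .single ⟨by rw [ha', hb', hab], h⟩
        · exact .head ⟨by rw [hfv, hfu], huv⟩ (.single ⟨by rw [hfv, hb', hab], h⟩)
        · exact .head ⟨by rw [hfv, ha', hab], G.symm h⟩
            (.single ⟨by rw [hfv, hfu], G.symm huv⟩)
  · intro hf
    refine ⟨fun h hh => (hverts h).2 ⟨hHv h hh, hf.subset hh⟩, fun x hx => ?_,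
      fun h hh => ?_, fun x hx => ?_, fun p q => (hf.adj p q).trans (hadj p q).symm⟩
    · have := hf.maps x ((hverts x).1 hx).2
      rwa [hfold x ((hverts x).1 hx).1] at this
    · have := hf.fix h hh
      rwa [hfold h (hHv h hh)] at this
    · obtain ⟨hxv, hxG⟩ := (hverts x).1 hx
      have hfx := hHv _ (hf.maps x hxG)
      have hpush : Relation.ReflTransGen (fun a b => f a = f b ∧ (G.contract u v).Adj a b)
          (fold u v x) (fold u v (f (fold u v x))) := by
        refine Relation.ReflTransGen.lift' (fold u v) ?_ _ _ (hf.reach x hxG)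
        rintro a b ⟨hab, h⟩
        by_cases e : fold u v a = fold u v b
        · simp only [Function.onFun, e]
          exact .refl
        · exact .single ⟨hab, (contract_adj_iff huv _ _).2 ⟨e, a, b, h, rfl, rfl⟩⟩
      rwa [hfold _ hfx, hfold x hxv] at hpush

theorem contractSeq_verts_subset (S : List (α × α)) (G : LGraph α) :
    (G.contractSeq S).verts ⊆ G.verts := by
  induction S generalizing G with
  | nil => exact Finset.Subset.refl _
  | cons p S ih => exact (ih (G.contract p.1 p.2)).trans (Finset.erase_subset _ _)

theorem exists_isRetraction_contractSeq (S : List (α × α)) (G : LGraph α) (hS : G.ValidSeq S) :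
    ∃ f, G.IsRetraction (G.contractSeq S) f := by
  induction S generalizing G with
  | nil => exact ⟨id, G.isRetraction_id⟩
  | cons p S ih =>
    obtain ⟨u, v⟩ := p
    obtain ⟨huv, hS⟩ := hS
    obtain ⟨f, hf⟩ := ih _ hS
    refine ⟨_, (isRetraction_contract_iff huv (fun h => ?_) f).1 hf⟩
    exact Finset.notMem_erase v _ (contractSeq_verts_subset S (G.contract u v) h)

theorem IsRetraction.isContractionOf {G H : LGraph α} {f : α → α} (hf : G.IsRetraction H f) :
    H.IsContractionOf G := by
  induction hn : G.verts.card generalizing G with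
  | zero =>
    have hG : G.verts = ∅ := Finset.card_eq_zero.1 hn
    exact ⟨[], trivial, hf.eq_of_verts_eq
      (hG.trans (Finset.subset_empty.1 (hG ▸ hf.subset)).symm)⟩
  | succ n ih =>
    by_cases hv : G.verts ⊆ H.verts
    · exact ⟨[], trivial, hf.eq_of_verts_eq (hv.antisymm hf.subset)⟩
    obtain ⟨v, hvG, hvH⟩ := Finset.not_subset.1 hv
    rcases (hf.reach v hvG).cases_head with h | ⟨u, ⟨hfe, hvu⟩, -⟩
    · exact absurd (hf.maps v hvG) (h ▸ hvH)
    have hcomp : (fun x => f (fold u v x)) = f := by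
      funext x
      by_cases h : x = v
      · simp [fold, h, hfe]
      · simp [fold, h]
    have hf' : (G.contract u v).IsRetraction H f :=
      (isRetraction_contract_iff (G.symm hvu) hvH f).2 (hcomp.symm ▸ hf)
    obtain ⟨S, hS, rfl⟩ := ih hf' (by
      change (G.verts.erase v).card = n
      rw [Finset.card_erase_of_mem hvG, hn, Nat.add_sub_cancel])
    exact ⟨(u, v) :: S, ⟨G.symm hvu, hS⟩, rfl⟩

/-! ### From retractions to witness structures -/

/-- The fibres of a retraction form a witness structure. -/
theorem IsRetraction.isWitnessStructure {G H : LGraph α} {f : α → α}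
    (hf : G.IsRetraction H f) :
    G.IsWitnessStructure H (H.verts.image fun h => G.verts.filter fun x => f x = h) := by
  have hmem : ∀ x h, x ∈ (G.verts.filter fun x => f x = h) ↔ x ∈ G.verts ∧ f x = h :=
    fun x h => Finset.mem_filter
  have hself : ∀ h ∈ H.verts, h ∈ (G.verts.filter fun x => f x = h) :=
    fun h hh => (hmem h h).2 ⟨hf.subset hh, hf.fix h hh⟩
  constructor
  · simp only [Finset.forall_mem_image]
    exact fun h _ => Finset.filter_subset _ _
  · simp only [Finset.forall_mem_image]
    exact fun h hh => ⟨h, hself h hh⟩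
  · intro x hx
    refine ⟨_, ⟨Finset.mem_image_of_mem _ (hf.maps x hx), (hmem x _).2 ⟨hx, rfl⟩⟩, ?_⟩
    rintro Wi ⟨hWi, hxi⟩
    obtain ⟨h, hh, rfl⟩ := Finset.mem_image.1 hWi
    rw [((hmem x h).1 hxi).2]
  · refine Finset.card_image_of_injOn fun a ha b hb hab => ?_
    have h1 := hself a ha
    rw [show (G.verts.filter fun x => f x = a) = _ from hab] at h1
    exact (hf.fix a ha).symm.trans ((hmem _ _).1 h1).2
  · simp only [Finset.forall_mem_image]
    intro h hh x hx y hy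
    have key : ∀ z, z ∈ (G.verts.filter fun x => f x = h) →
        G.ReachIn (G.verts.filter fun x => f x = h) z h := by
      intro z hz
      obtain ⟨hzG, hzh⟩ := (hmem z h).1 hz
      have hr := hf.reach z hzG
      rw [hzh] at hr
      clear hzh hz hzG
      induction hr using Relation.ReflTransGen.head_induction_on with
      | refl => exact .refl
      | @head a c hac hr ih =>
        have hfix : f c = h := by
          have : ∀ {p q}, Relation.ReflTransGen (fun a b => f a = f b ∧ G.Adj a b) p q →
              f p = f q := fun hpq => by
            induction hpq with
            | refl => rfl
            | tail _ e ih => exact ih.trans e.1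
          exact (this hr).trans (hf.fix h hh)
        exact .head ⟨(hmem _ _).2 ⟨(G.mem_of_adj hac.2).1, hac.1.trans hfix⟩,
          (hmem _ _).2 ⟨(G.mem_of_adj hac.2).2, hfix⟩, hac.2⟩ ih
    have : Std.Symm fun a b => a ∈ (G.verts.filter fun x => f x = h) ∧
        b ∈ (G.verts.filter fun x => f x = h) ∧ G.Adj a b :=
      ⟨fun _ _ ⟨h1, h2, h3⟩ => ⟨h2, h1, G.symm h3⟩⟩
    exact (key x hx).trans (Relation.ReflTransGen.stdSymm.symm _ _ (key y hy))
  · simp only [Finset.forall_mem_image]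
    intro h hh
    refine ⟨h, ⟨hh, hself h hh⟩, ?_⟩
    rintro k ⟨hk, hkm⟩
    exact (hf.fix k hk).symm.trans ((hmem _ _).1 hkm).2
  · simp only [Finset.forall_mem_image]
    intro u hu v hv huv a ha b hb hua hvb
    obtain rfl : u = a := (hf.fix u hu).symm.trans ((hmem _ _).1 hua).2
    obtain rfl : v = b := (hf.fix v hv).symm.trans ((hmem _ _).1 hvb).2
    rw [hf.adj]
    constructor
    · rintro ⟨-, x, y, h, hx, hy⟩
      exact ⟨x, (hmem _ _).2 ⟨(G.mem_of_adj h).1, hx⟩, y,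
        (hmem _ _).2 ⟨(G.mem_of_adj h).2, hy⟩, h⟩
    · rintro ⟨x, hx, y, hy, h⟩
      exact ⟨huv, x, y, h, ((hmem _ _).1 hx).2, ((hmem _ _).1 hy).2⟩

end LGraph

/-- Let `G` and `H` be finite labeled graphs with `V(H) ⊆ V(G)`.
Then `H` is a labeled contraction of `G` iff there exists a witness structure of `G`
into `H`. -/
theorem contraction_iff_witnessStructure {α : Type} [DecidableEq α]
    (G H : LGraph α) (hsub : H.verts ⊆ G.verts) :
    H.IsContractionOf G ↔ ∃ W : Finset (Finset α), G.IsWitnessStructure H W := by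
  constructor
  · rintro ⟨S, hS, rfl⟩
    obtain ⟨f, hf⟩ := LGraph.exists_isRetraction_contractSeq S G hS
    exact ⟨_, hf.isWitnessStructure⟩
  · rintro ⟨W, hW⟩
    obtain ⟨f, hf⟩ := hW.exists_isRetraction hsub
    exact hf.isContractionOf
end

section
/- Let W be a witness structure of a graph G into a graph H, and let uv ∈ E(G) be an edge whose endpoints u and v lie in the same witness set of W. If v ∉ V(H), then H is a labeled contraction of G/(u,v). -/
namespace LGraph

variable {α : Type}

/-- The map `r` sends every vertex of `G` to the representative of its witness set, the witness
sets being the fibres of `r` on `V(G)`. Values of `r` outside `V(G)` are irrelevant. Connectedness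
of a fibre is expressed by joining each of its vertices to the representative. -/
structure IsRetraction_s1 (G H : LGraph α) (r : α → α) : Prop where
  map_mem : ∀ x ∈ G.verts, r x ∈ H.verts
  subset : H.verts ⊆ G.verts
  map_eq : ∀ h ∈ H.verts, r h = h
  conn : ∀ x ∈ G.verts, Relation.ReflTransGen (fun a b => G.Adj a b ∧ r a = r b) x (r x)
  adj_iff : ∀ a ∈ H.verts, ∀ b ∈ H.verts, a ≠ b →
    (H.Adj a b ↔ ∃ x y, G.Adj x y ∧ r x = a ∧ r y = b)

theorem ext_adj {G H : LGraph α} (hv : G.verts = H.verts)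
    (ha : ∀ a b, G.Adj a b ↔ H.Adj a b) : G = H := by
  cases G
  cases H
  simp only [mk.injEq]
  exact ⟨hv, funext fun a => funext fun b => propext (ha a b)⟩

theorem IsRetraction_s1.eq_of_subset {G H : LGraph α} {r : α → α} (h : G.IsRetraction_s1 H r)
    (hs : G.verts ⊆ H.verts) : G = H := by
  refine ext_adj (hs.antisymm h.subset) fun a b => ⟨fun hab => ?_, fun hab => ?_⟩
  · have ha := hs (G.mem_of_adj hab).1
    have hb := hs (G.mem_of_adj hab).2
    have hne : a ≠ b := by
      rintro rfl
      exact G.loopless _ hab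
    exact (h.adj_iff a ha b hb hne).2 ⟨a, b, hab, h.map_eq a ha, h.map_eq b hb⟩
  · have hm := H.mem_of_adj hab
    have hne : a ≠ b := by
      rintro rfl
      exact H.loopless _ hab
    obtain ⟨x, y, hxy, rfl, rfl⟩ := (h.adj_iff a hm.1 b hm.2 hne).1 hab
    have hm' := G.mem_of_adj hxy
    rwa [h.map_eq x (hs hm'.1), h.map_eq y (hs hm'.2)]

variable [DecidableEq α]

/-- Replacing `v` by `u` maps each edge of `G` to an edge of `G/(u,v)` or to a single vertex. -/
theorem contract_adj_of_adj {G : LGraph α} {u v a b : α} (huv : G.Adj u v) (hab : G.Adj a b) :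
    (if a = v then u else a) = (if b = v then u else b) ∨
      (G.contract u v).Adj (if a = v then u else a) (if b = v then u else b) := by
  have hu := (G.mem_of_adj huv).1
  have hm := G.mem_of_adj hab
  have hne : u ≠ v := by
    rintro rfl
    exact G.loopless _ huv
  refine or_iff_not_imp_left.2 fun hn => ⟨hn, ?_, ?_, ?_⟩
  · split_ifs <;> simp_all
  · split_ifs <;> simp_all
  · have := G.symm hab
    split_ifs <;> simp_all

theorem IsRetraction_s1.contract {G H : LGraph α} {r : α → α} (h : G.IsRetraction_s1 H r) {u v : α}
    (huv : G.Adj u v) (hr : r u = r v) (hvH : v ∉ H.verts) :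
    (G.contract u v).IsRetraction_s1 H r := by
  have hrf : ∀ a, r (if a = v then u else a) = r a := by
    intro a
    split_ifs with ha
    · rw [ha, hr]
    · rfl
  refine ⟨fun x hx => h.map_mem x (Finset.mem_of_mem_erase hx), fun x hx => ?_, h.map_eq,
    fun x hx => ?_, fun a ha b hb hne => ?_⟩
  · refine Finset.mem_erase.2 ⟨?_, h.subset hx⟩
    rintro rfl
    exact hvH hx
  · obtain ⟨hxv, hxG⟩ := Finset.mem_erase.1 hx
    have hrx : r x ≠ v := fun e => hvH (e ▸ h.map_mem x hxG)
    have key : ∀ z, Relation.ReflTransGen (fun a b => G.Adj a b ∧ r a = r b) x z →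
        Relation.ReflTransGen (fun a b => (G.contract u v).Adj a b ∧ r a = r b)
          (if x = v then u else x) (if z = v then u else z) := by
      intro z hz
      induction hz with
      | refl => exact .refl
      | tail _ hab ih =>
        rcases contract_adj_of_adj huv hab.1 with e | e
        · exact e ▸ ih
        · exact ih.tail ⟨e, by rw [hrf, hrf, hab.2]⟩
    simpa only [if_neg hxv, if_neg hrx] using key (r x) (h.conn x hxG)
  · rw [h.adj_iff a ha b hb hne]
    constructor
    · rintro ⟨x, y, hxy, rfl, rfl⟩
      rcases contract_adj_of_adj huv hxy with e | e
      · exact absurd (by rw [← hrf x, e, hrf]) hne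
      · exact ⟨_, _, e, hrf x, hrf y⟩
    · rintro ⟨x, y, ⟨-, -, -, hxy⟩, rfl, rfl⟩
      rcases hxy with hxy | ⟨rfl, hxy⟩ | ⟨rfl, hxy⟩
      · exact ⟨x, y, hxy, rfl, rfl⟩
      · exact ⟨v, y, hxy, hr.symm, rfl⟩
      · exact ⟨x, v, G.symm hxy, rfl, hr.symm⟩

theorem IsRetraction_s1.isContractionOf {H : LGraph α} {r : α → α} :
    ∀ (n : ℕ) (G : LGraph α), G.verts.card = n → G.IsRetraction_s1 H r → H.IsContractionOf G := by
  intro n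
  induction n with
  | zero =>
    intro G hn h
    refine ⟨[], trivial, h.eq_of_subset ?_⟩
    simp [Finset.card_eq_zero.1 hn]
  | succ n ih =>
    intro G hn h
    by_cases hs : G.verts ⊆ H.verts
    · exact ⟨[], trivial, h.eq_of_subset hs⟩
    obtain ⟨v, hv, hvH⟩ := Finset.not_subset.1 hs
    -- A neighbour of `v` in its fibre: the second vertex of a path from `v` to `r v ≠ v`.
    obtain e | ⟨u, ⟨hvu, hr⟩, -⟩ := (h.conn v hv).cases_head
    · exact absurd (e.symm ▸ h.map_mem v hv) hvH
    have hcard : (G.contract u v).verts.card = n := by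
      change (G.verts.erase v).card = n
      rw [Finset.card_erase_of_mem hv, hn, Nat.add_sub_cancel]
    obtain ⟨S, hS, e⟩ := ih _ hcard (h.contract (G.symm hvu) hr.symm hvH)
    exact ⟨(u, v) :: S, ⟨G.symm hvu, hS⟩, e⟩

/-- The representative map of a witness structure; its fibres are the witness sets. -/
theorem IsWitnessStructure.exists_isRetraction_s1 {G H : LGraph α} {W : Finset (Finset α)}
    (hW : G.IsWitnessStructure H W) :
    ∃ r : α → α, G.IsRetraction_s1 H r ∧ ∀ Wi ∈ W, ∀ x ∈ Wi, ∀ y ∈ Wi, r x = r y := by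
  have huniq : ∀ A ∈ W, ∀ B ∈ W, ∀ x, x ∈ A → x ∈ B → A = B := fun A hA B hB x hxA hxB =>
    (hW.covers x (hW.subset_verts A hA hxA)).unique ⟨hA, hxA⟩ ⟨hB, hxB⟩
  have hex : ∀ x, ∃ y, ∀ A ∈ W, x ∈ A → y ∈ H.verts ∧ y ∈ A := by
    intro x
    by_cases hx : ∃ A ∈ W, x ∈ A
    · obtain ⟨A, hA, hxA⟩ := hx
      obtain ⟨y, hy, -⟩ := hW.unique_rep A hA
      exact ⟨y, fun B hB hxB => huniq A hA B hB x hxA hxB ▸ hy⟩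
    · exact ⟨x, fun A hA hxA => absurd ⟨A, hA, hxA⟩ hx⟩
  choose r hr using hex
  have hconst : ∀ A ∈ W, ∀ x ∈ A, ∀ y ∈ A, r x = r y := fun A hA x hx y hy =>
    (hW.unique_rep A hA).unique (hr x A hA hx) (hr y A hA hy)
  have hrep : ∀ h ∈ H.verts, ∃ A ∈ W, h ∈ A := by
    intro h hh
    have hρ' : ∀ A, ∃ y, A ∈ W → y ∈ H.verts ∧ y ∈ A := fun A => by
      by_cases hA : A ∈ W
      · exact (hW.unique_rep A hA).exists.imp fun y hy _ => hy
      · exact ⟨h, fun hA' => absurd hA' hA⟩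
    choose ρ hρ using hρ'
    have hsurj := Finset.surj_on_of_inj_on_of_card_le (s := W) (t := H.verts) (fun A _ => ρ A)
      (fun A hA => (hρ A hA).1)
      (fun A B hA hB e => huniq A hA B hB (ρ A) (hρ A hA).2 (e ▸ (hρ B hB).2)) hW.card_eq.ge
    obtain ⟨A, hA, rfl⟩ := hsurj h hh
    exact ⟨A, hA, (hρ A hA).2⟩
  have hfix : ∀ h ∈ H.verts, r h = h := fun h hh => by
    obtain ⟨A, hA, hhA⟩ := hrep h hh
    exact (hW.unique_rep A hA).unique (hr h A hA hhA) ⟨hh, hhA⟩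
  refine ⟨r, ⟨fun x hx => ?_, fun h hh => ?_, hfix, fun x hx => ?_, fun a ha b hb hne => ?_⟩,
    hconst⟩
  · obtain ⟨A, ⟨hA, hxA⟩, -⟩ := hW.covers x hx
    exact (hr x A hA hxA).1
  · obtain ⟨A, hA, hhA⟩ := hrep h hh
    exact hW.subset_verts A hA hhA
  · obtain ⟨A, ⟨hA, hxA⟩, -⟩ := hW.covers x hx
    exact Relation.ReflTransGen.mono (fun a b hab => ⟨hab.2.2, hconst A hA a hab.1 b hab.2.1⟩) _ _
      (hW.connected A hA x hxA (r x) (hr x A hA hxA).2)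
  · obtain ⟨A, hA, haA⟩ := hrep a ha
    obtain ⟨B, hB, hbB⟩ := hrep b hb
    rw [hW.adj_iff a ha b hb hne A hA B hB haA hbB]
    constructor
    · rintro ⟨x, hx, y, hy, hxy⟩
      exact ⟨x, y, hxy, (hconst A hA x hx a haA).trans (hfix a ha),
        (hconst B hB y hy b hbB).trans (hfix b hb)⟩
    · rintro ⟨x, y, hxy, rfl, rfl⟩
      obtain ⟨hx, hy⟩ := G.mem_of_adj hxy
      obtain ⟨A', ⟨hA', hxA'⟩, -⟩ := hW.covers x hx
      obtain ⟨B', ⟨hB', hyB'⟩, -⟩ := hW.covers y hy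
      obtain rfl := huniq A hA A' hA' _ haA (hr x A' hA' hxA').2
      obtain rfl := huniq B hB B' hB' _ hbB (hr y B' hB' hyB').2
      exact ⟨x, hxA', y, hyB', hxy⟩

end LGraph

/-- If `W` is a witness structure of `G` into `H`, `uv ∈ E(G)` with
`u, v` in the same witness set and `v ∉ V(H)`, then `H` is a labeled contraction of
`G/(u,v)`. -/
theorem isContractionOf_contract_of_witness {α : Type} [DecidableEq α]
    (G H : LGraph α) (W : Finset (Finset α)) (hW : G.IsWitnessStructure H W)
    (u v : α) (huv : G.Adj u v)
    (Wi : Finset α) (hWi : Wi ∈ W) (hu : u ∈ Wi) (hv : v ∈ Wi)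
    (hvH : v ∉ H.verts) :
    H.IsContractionOf (G.contract u v) := by
  obtain ⟨r, hr, hconst⟩ := hW.exists_isRetraction_s1
  exact LGraph.IsRetraction_s1.isContractionOf _ _ rfl
    (hr.contract huv (hconst Wi hWi u hu v hv) hvH)
end

section
/- Let G be a finite graph and let G' = G/(u,v) be obtained from G by a single labeled contraction of an edge uv. Then δ(G') ≤ δ(G) + 1, i.e., a single edge contraction increases the degeneracy of a graph by at most one. -/
namespace LGraph

theorem degreeIn_le_card {β : Type} (G : LGraph β) (S : Finset β) (x : β) :
    G.degreeIn S x ≤ S.card := by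
  unfold degreeIn
  rw [← Set.ncard_coe_finset S]
  exact Set.ncard_le_ncard (fun y hy => hy.1) S.finite_toSet

/-- The infimum defining the degeneracy is attained, since `|V(G)|` bounds every degree. -/
theorem degenLE_degeneracy {β : Type} (G : LGraph β) : G.DegenLE G.degeneracy := by
  refine Nat.sInf_mem (s := {d | G.DegenLE d}) ⟨G.verts.card, fun S hS hne => ?_⟩
  obtain ⟨x, hx⟩ := hne
  exact ⟨x, hx, (G.degreeIn_le_card S x).trans (Finset.card_le_card hS)⟩

theorem DegenLE.contract {β : Type} [DecidableEq β] {G : LGraph β} {d : ℕ} (h : G.DegenLE d)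
    (u v : β) : (G.contract u v).DegenLE (d + 1) := by
  intro S hS hne
  by_cases hT : (S.erase u).Nonempty
  · have hTG : S.erase u ⊆ G.verts :=
      (Finset.erase_subset u S).trans (hS.trans (Finset.erase_subset v G.verts))
    obtain ⟨x, hx, hdeg⟩ := h _ hTG hT
    obtain ⟨hxu, hxS⟩ := Finset.mem_erase.mp hx
    refine ⟨x, hxS, le_trans ?_ (Nat.add_le_add_right hdeg 1)⟩
    have hfin : {y | y ∈ S.erase u ∧ G.Adj x y}.Finite :=
      (S.erase u).finite_toSet.subset fun y hy => hy.1
    refine le_trans (Set.ncard_le_ncard ?_ (hfin.insert u)) (Set.ncard_insert_le _ _)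
    rintro y ⟨hyS, -, -, -, hadj⟩
    by_cases hyu : y = u
    · exact Or.inl hyu
    · refine Or.inr ⟨Finset.mem_erase.mpr ⟨hyu, hyS⟩, ?_⟩
      rcases hadj with hadj | ⟨hx', -⟩ | ⟨hy', -⟩
      · exact hadj
      · exact absurd hx' hxu
      · exact absurd hy' hyu
  · obtain ⟨x, hx⟩ := hne
    have hSu : S ⊆ {u} :=
      (Finset.erase_eq_empty_iff S u).mp (Finset.not_nonempty_iff_eq_empty.mp hT) |>.elim
        (fun h => by simp [h]) (fun h => h.subset)
    refine ⟨x, hx, ((G.contract u v).degreeIn_le_card S x).trans ?_⟩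
    have := Finset.card_le_card hSu
    rw [Finset.card_singleton] at this
    lia

end LGraph

/-- A single labeled contraction of an edge `uv` increases the
degeneracy of a graph by at most one: `δ(G/(u,v)) ≤ δ(G) + 1`. -/
theorem degeneracy_contract_le {α : Type} [DecidableEq α]
    (G : LGraph α) (u v : α) (huv : G.Adj u v) :
    (G.contract u v).degeneracy ≤ G.degeneracy + 1 := by
  exact Nat.sInf_le (G.degenLE_degeneracy.contract u v)
end

section
/- Let G be a finite graph of maximum degree at most Δ, where Δ ≥ 2, and let t ≥ 0. Then any graph obtained from G by applying t labeled contractions has maximum degree at most Δ + t(Δ − 2). -/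
namespace LGraph

theorem finite_setOf_adj {α : Type} (G : LGraph α) (x : α) : {y | G.Adj x y}.Finite :=
  G.verts.finite_toSet.subset fun _ hy => (G.mem_of_adj hy).2

theorem degree_contract_self_add_two_le {α : Type} [DecidableEq α] (G : LGraph α) {u v : α}
    (h : G.Adj u v) : (G.contract u v).degree u + 2 ≤ G.degree u + G.degree v := by
  have hu := Set.ncard_sdiff_singleton_add_one (s := {y | G.Adj u y}) (a := v) h
    (G.finite_setOf_adj u)
  have hv := Set.ncard_sdiff_singleton_add_one (s := {y | G.Adj v y}) (a := u) (G.symm h)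
    (G.finite_setOf_adj v)
  have hsub : {y | (G.contract u v).Adj u y} ⊆
      ({y | G.Adj u y} \ {v}) ∪ ({y | G.Adj v y} \ {u}) := by
    rintro y ⟨hne, -, hy, h1 | ⟨-, h1⟩ | ⟨h1, -⟩⟩
    · exact Or.inl ⟨h1, Finset.ne_of_mem_erase hy⟩
    · exact Or.inr ⟨h1, hne.symm⟩
    · exact absurd h1.symm hne
  have hle := Set.ncard_le_ncard hsub
    (((G.finite_setOf_adj u).sdiff).union ((G.finite_setOf_adj v).sdiff))
  have hun := Set.ncard_union_le ({y | G.Adj u y} \ {v}) ({y | G.Adj v y} \ {u})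
  unfold degree
  omega

theorem degree_contract_le {α : Type} [DecidableEq α] (G : LGraph α) (u v : α) {x : α}
    (hxu : x ≠ u) : (G.contract u v).degree x ≤ G.degree x := by
  by_cases hvx : G.Adj v x
  · -- The neighbour `v` of `x` is replaced by `u`.
    have hx := Set.ncard_sdiff_singleton_add_one (s := {y | G.Adj x y}) (a := v) (G.symm hvx)
      (G.finite_setOf_adj x)
    have hsub : {y | (G.contract u v).Adj x y} ⊆ insert u ({y | G.Adj x y} \ {v}) := by
      rintro y ⟨-, -, hy, h1 | ⟨h1, -⟩ | ⟨h1, -⟩⟩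
      · exact Or.inr ⟨h1, Finset.ne_of_mem_erase hy⟩
      · exact absurd h1 hxu
      · exact Or.inl h1
    have hle := Set.ncard_le_ncard hsub (((G.finite_setOf_adj x).sdiff).insert u)
    have hins := Set.ncard_insert_le u ({y | G.Adj x y} \ {v})
    unfold degree
    omega
  · refine Set.ncard_le_ncard ?_ (G.finite_setOf_adj x)
    rintro y ⟨-, -, -, h1 | ⟨h1, -⟩ | ⟨-, h1⟩⟩
    · exact h1
    · exact absurd h1 hxu
    · exact absurd h1 hvx

theorem sum_erase_update {α : Type} [DecidableEq α] {s : Finset α} (w : α → ℕ) {u v : α}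
    (hu : u ∈ s) (hv : v ∈ s) (huv : u ≠ v) :
    ∑ x ∈ s.erase v, Function.update w u (w u + w v + 1) x = ∑ x ∈ s, w x + 1 := by
  rw [Finset.sum_update_of_mem (Finset.mem_erase.2 ⟨huv, hu⟩), Finset.sdiff_singleton_eq_erase,
    ← Finset.add_sum_erase s w hv, ← Finset.add_sum_erase (s.erase v) w
      (Finset.mem_erase.2 ⟨huv, hu⟩)]
  ring

/-- The weighted form of the bound, where `k` plays the role of `Δ - 2`: `w` is an arbitrary
weight, to be read as the number of contractions already absorbed by each vertex. -/
theorem degree_contractSeq_le {α : Type} [DecidableEq α] (k : ℕ) (S : List (α × α)) :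
    ∀ (G : LGraph α) (w : α → ℕ), G.ValidSeq S →
      (∀ x ∈ G.verts, G.degree x ≤ k + 2 + w x * k) →
      ∀ x ∈ (G.contractSeq S).verts,
        (G.contractSeq S).degree x ≤ k + 2 + (∑ y ∈ G.verts, w y + S.length) * k := by
  induction S with
  | nil =>
    intro G w _ hw x hx
    have hwx : w x ≤ ∑ y ∈ G.verts, w y := Finset.single_le_sum (fun _ _ => Nat.zero_le _) hx
    refine (hw x hx).trans ?_
    simp only [List.length_nil, add_zero]
    gcongr
  | cons e S ih =>
    obtain ⟨u, v⟩ := e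
    rintro G w ⟨huv, hS⟩ hw x hx
    obtain ⟨hu, hv⟩ := G.mem_of_adj huv
    have hne : u ≠ v := by
      rintro rfl
      exact G.loopless _ huv
    have key := ih (G.contract u v) (Function.update w u (w u + w v + 1)) hS ?_ x hx
    · have hsum : ∑ y ∈ (G.contract u v).verts, Function.update w u (w u + w v + 1) y
          = ∑ y ∈ G.verts, w y + 1 := sum_erase_update w hu hv hne
      rw [hsum, add_right_comm _ 1 S.length] at key
      exact key
    · intro y hy
      rcases eq_or_ne y u with rfl | hyu
      · rw [Function.update_self]
        have h1 := G.degree_contract_self_add_two_le huv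
        have h2 := hw _ hu
        have h3 := hw _ hv
        linarith
      · rw [Function.update_of_ne hyu]
        exact (G.degree_contract_le u v hyu).trans (hw y (Finset.mem_of_mem_erase hy))

end LGraph

/-- If `G` has maximum degree at most `Δ ≥ 2`, then any graph
obtained from `G` by applying `t` labeled contractions has maximum degree at most
`Δ + t(Δ − 2)`. -/
theorem maxDegree_contractSeq_le {α : Type} [DecidableEq α]
    (G : LGraph α) (Δ t : ℕ) (hΔ : 2 ≤ Δ) (hmax : G.maxDegree ≤ Δ)
    (S : List (α × α)) (hS : G.ValidSeq S) (hlen : S.length = t) :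
    (G.contractSeq S).maxDegree ≤ Δ + t * (Δ - 2) := by
  obtain ⟨k, rfl⟩ := Nat.exists_eq_add_of_le' hΔ
  refine Finset.sup_le fun x hx => ?_
  have h := LGraph.degree_contractSeq_le k S G (fun _ => 0) hS
    (fun y hy => by simpa using Finset.sup_le_iff.1 hmax y hy) x hx
  simpa [hlen] using h
end

section
/- Let G and H be graphs for which there exist labeled contraction sequences S_1 on G and S_2 on H with |S_1| + |S_2| ≤ k and G/S_1 = H/S_2. Then tw(G ∪ H) ≤ min(tw(G), tw(H)) + k, where G ∪ H is the graph with vertex set V(G) ∪ V(H) and edge set E(G) ∪ E(H). -/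
namespace LGraph

variable {α : Type}

/-- The one-bag decomposition; it makes the infimum defining `treewidth` one over a nonempty
set. -/
theorem exists_treewidthLE (G : LGraph α) : {w | G.TreewidthLE w}.Nonempty := by
  refine ⟨G.verts.card, Unit, ⟨⊥, ?_, fun _ => G.verts, fun _ => Finset.Subset.refl _,
    fun x hx => ⟨(), hx⟩, fun h => ⟨(), G.mem_of_adj h⟩, fun _ _ _ _ _ hx _ _ _ => hx⟩, ?_⟩
  · exact SimpleGraph.IsTree.of_subsingleton
  · intro t
    exact Nat.le_succ _

theorem treewidthLE_treewidth (G : LGraph α) : G.TreewidthLE G.treewidth :=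
  Nat.sInf_mem G.exists_treewidthLE

theorem TreewidthLE.treewidth_le {G : LGraph α} {w : ℕ} (h : G.TreewidthLE w) :
    G.treewidth ≤ w :=
  Nat.sInf_le h

/-- If the subtrees of `u` and `v` share a node `s`, their union is closed under paths: the path
from `t₁` to `t₂` lies within the union of the paths from `t₁` to `s` and from `s` to `t₂`. -/
theorem TreeDecomp.mem_or_mem_of_path {G : LGraph α} {ι : Type} (D : G.TreeDecomp ι) {u v : α}
    {s t₁ t₂ : ι} (hus : u ∈ D.bag s) (hvs : v ∈ D.bag s) (p : D.T.Walk t₁ t₂) (hp : p.IsPath)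
    (h₁ : u ∈ D.bag t₁) (h₂ : v ∈ D.bag t₂) :
    ∀ t ∈ p.support, u ∈ D.bag t ∨ v ∈ D.bag t := by
  classical
  intro t ht
  obtain ⟨q₁, hq₁⟩ := (D.isTree.connected t₁ s).exists_isPath
  obtain ⟨q₂, hq₂⟩ := (D.isTree.connected s t₂).exists_isPath
  have hpe : p = (q₁.append q₂).bypass :=
    (D.isTree.existsUnique_path t₁ t₂).unique hp (SimpleGraph.Walk.bypass_isPath _)
  rw [hpe] at ht
  have ht' := SimpleGraph.Walk.support_bypass_subset_support _ ht
  rw [SimpleGraph.Walk.mem_support_append_iff] at ht'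
  rcases ht' with h | h
  · exact Or.inl (D.coherent u q₁ hq₁ h₁ hus t h)
  · exact Or.inr (D.coherent v q₂ hq₂ hvs h₂ t h)

variable [DecidableEq α]

/-- Contracting an edge does not increase the treewidth. -/
theorem TreewidthLE.contract {G : LGraph α} {w : ℕ} {u v : α} (h : G.TreewidthLE w)
    (huv : G.Adj u v) : (G.contract u v).TreewidthLE w := by
  obtain ⟨ι, D, hD⟩ := h
  have hne : u ≠ v := fun e => G.loopless u (by simpa [e] using huv)
  obtain ⟨s, hus, hvs⟩ := D.covers_edge huv
  have hmem : ∀ (t : ι) (x : α), x ∈ (D.bag t).image (fun x => if x = v then u else x) ↔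
      x ≠ v ∧ (x ∈ D.bag t ∨ (x = u ∧ v ∈ D.bag t)) := by
    intro t x
    simp only [Finset.mem_image]
    constructor
    · rintro ⟨a, ha, rfl⟩
      split_ifs with h
      · subst h; exact ⟨hne, Or.inr ⟨rfl, ha⟩⟩
      · exact ⟨h, Or.inl ha⟩
    · rintro ⟨hx, h | ⟨rfl, h⟩⟩
      · exact ⟨x, h, if_neg hx⟩
      · exact ⟨v, h, if_pos rfl⟩
  refine ⟨ι, ⟨D.T, D.isTree, fun t => (D.bag t).image (fun x => if x = v then u else x),
    ?_, ?_, ?_, ?_⟩, fun t => Finset.card_image_le.trans (hD t)⟩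
  · intro t x hx
    rw [hmem] at hx
    refine Finset.mem_erase.2 ⟨hx.1, ?_⟩
    rcases hx.2 with h | ⟨rfl, -⟩
    · exact D.bag_subset t h
    · exact (G.mem_of_adj huv).1
  · intro x hx
    obtain ⟨hxv, hx⟩ := Finset.mem_erase.1 hx
    obtain ⟨t, ht⟩ := D.covers_vert x hx
    exact ⟨t, (hmem t x).2 ⟨hxv, Or.inl ht⟩⟩
  · rintro x y ⟨-, hx, hy, h⟩
    have hxv := (Finset.mem_erase.1 hx).1
    have hyv := (Finset.mem_erase.1 hy).1
    simp only [hmem]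
    rcases h with h | ⟨rfl, h⟩ | ⟨rfl, h⟩ <;> obtain ⟨t, h1, h2⟩ := D.covers_edge h
    · exact ⟨t, ⟨hxv, Or.inl h1⟩, ⟨hyv, Or.inl h2⟩⟩
    · exact ⟨t, ⟨hxv, Or.inr ⟨rfl, h1⟩⟩, ⟨hyv, Or.inl h2⟩⟩
    · exact ⟨t, ⟨hxv, Or.inl h2⟩, ⟨hyv, Or.inr ⟨rfl, h1⟩⟩⟩
  · intro x t₁ t₂ p hp h1 h2 t ht
    rw [hmem] at h1 h2 ⊢
    refine ⟨h1.1, ?_⟩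
    rcases h1.2 with a | ⟨rfl, a⟩ <;> rcases h2.2 with b | ⟨e, b⟩
    · exact Or.inl (D.coherent x p hp a b t ht)
    · subst e
      exact (D.mem_or_mem_of_path hus hvs p hp a b t ht).imp id fun h => ⟨rfl, h⟩
    · exact (D.mem_or_mem_of_path hvs hus p hp a b t ht).symm.imp id fun h => ⟨rfl, h⟩
    · exact Or.inr ⟨rfl, D.coherent v p hp a b t ht⟩

theorem TreewidthLE.contractSeq {w : ℕ} : ∀ (S : List (α × α)) {G : LGraph α},
    G.TreewidthLE w → G.ValidSeq S → (G.contractSeq S).TreewidthLE w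
  | [], _, h, _ => h
  | (_, _) :: S, _, h, hS => TreewidthLE.contractSeq S (h.contract hS.1) hS.2

theorem treewidth_contractSeq_le {G : LGraph α} {S : List (α × α)} (hS : G.ValidSeq S) :
    (G.contractSeq S).treewidth ≤ G.treewidth :=
  (TreewidthLE.contractSeq S G.treewidthLE_treewidth hS).treewidth_le

/-- The set `R` of vertices deleted by a contraction sequence: it has at most `|S|` elements, and
edges avoiding it survive. -/
theorem exists_deleted : ∀ (S : List (α × α)) (G : LGraph α), G.ValidSeq S →
    ∃ R : Finset α, R.card ≤ S.length ∧ G.verts = (G.contractSeq S).verts ∪ R ∧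
      ∀ x y, G.Adj x y → x ∉ R → y ∉ R → (G.contractSeq S).Adj x y
  | [], G, _ => ⟨∅, by simp, by simp [LGraph.contractSeq], fun _ _ h _ _ => h⟩
  | (u, v) :: S, G, hS => by
    obtain ⟨R, hc, hv, he⟩ := exists_deleted S (G.contract u v) hS.2
    refine ⟨insert v R, (Finset.card_insert_le _ _).trans (Nat.succ_le_succ hc), ?_, ?_⟩
    · change G.verts.erase v = _ at hv
      rw [Finset.union_insert]
      change G.verts = insert v (((G.contract u v).contractSeq S).verts ∪ R)
      rw [← hv, Finset.insert_erase (G.mem_of_adj hS.1).2]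
    · intro x y hxy hx hy
      simp only [Finset.mem_insert, not_or] at hx hy
      refine he x y ⟨?_, ?_, ?_, Or.inl hxy⟩ hx.2 hy.2
      · rintro rfl
        exact G.loopless x hxy
      · exact Finset.mem_erase.2 ⟨hx.1, (G.mem_of_adj hxy).1⟩
      · exact Finset.mem_erase.2 ⟨hy.1, (G.mem_of_adj hxy).2⟩

/-- Adding a set `R` of vertices to every bag: if every edge of `K` avoiding `R` is an edge of `F`,
then the treewidth of `K` exceeds that of `F` by at most `|R|`. -/
theorem TreewidthLE.add_verts {F K : LGraph α} {w : ℕ} (R : Finset α) (h : F.TreewidthLE w)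
    (hv : K.verts = F.verts ∪ R)
    (he : ∀ x y, K.Adj x y → x ∉ R → y ∉ R → F.Adj x y) :
    K.TreewidthLE (w + R.card) := by
  obtain ⟨ι, D, hD⟩ := h
  obtain ⟨t₀⟩ := D.isTree.connected.nonempty
  have hcov : ∀ x ∈ K.verts, ∃ t, x ∈ D.bag t ∪ R := by
    intro x hx
    rw [hv, Finset.mem_union] at hx
    rcases hx with hx | hx
    · obtain ⟨t, ht⟩ := D.covers_vert x hx
      exact ⟨t, Finset.mem_union_left _ ht⟩
    · exact ⟨t₀, Finset.mem_union_right _ hx⟩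
  refine ⟨ι, ⟨D.T, D.isTree, fun t => D.bag t ∪ R, ?_, hcov, ?_, ?_⟩, ?_⟩
  · intro t
    rw [hv]
    exact Finset.union_subset_union_left (D.bag_subset t)
  · intro x y hxy
    by_cases hx : x ∈ R
    · obtain ⟨t, ht⟩ := hcov y (K.mem_of_adj hxy).2
      exact ⟨t, Finset.mem_union_right _ hx, ht⟩
    by_cases hy : y ∈ R
    · obtain ⟨t, ht⟩ := hcov x (K.mem_of_adj hxy).1
      exact ⟨t, ht, Finset.mem_union_right _ hy⟩
    obtain ⟨t, h1, h2⟩ := D.covers_edge (he x y hxy hx hy)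
    exact ⟨t, Finset.mem_union_left _ h1, Finset.mem_union_left _ h2⟩
  · intro x t₁ t₂ p hp h1 h2 t ht
    by_cases hx : x ∈ R
    · exact Finset.mem_union_right _ hx
    · simp only [Finset.mem_union, hx, or_false] at h1 h2 ⊢
      exact D.coherent x p hp h1 h2 t ht
  · intro t
    have := Finset.card_union_le (D.bag t) R
    have := hD t
    change (D.bag t ∪ R).card ≤ _
    omega

end LGraph

/-- If there are labeled contraction sequences `S₁` on `G` and `S₂`
on `H` with `|S₁| + |S₂| ≤ k` and `G/S₁ = H/S₂`, then
`tw(G ∪ H) ≤ min(tw(G), tw(H)) + k`. -/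
theorem treewidth_union_le_of_commonContraction {α : Type} [DecidableEq α]
    (G H : LGraph α) (k : ℕ) (S₁ S₂ : List (α × α))
    (h₁ : G.ValidSeq S₁) (h₂ : H.ValidSeq S₂)
    (hk : S₁.length + S₂.length ≤ k)
    (heq : G.contractSeq S₁ = H.contractSeq S₂) :
    (G.union H).treewidth ≤ min G.treewidth H.treewidth + k := by
  obtain ⟨R₁, hc₁, hv₁, he₁⟩ := LGraph.exists_deleted S₁ G h₁
  obtain ⟨R₂, hc₂, hv₂, he₂⟩ := LGraph.exists_deleted S₂ H h₂
  have hF₁ := LGraph.treewidth_contractSeq_le h₁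
  have hF₂ := LGraph.treewidth_contractSeq_le h₂
  rw [← heq] at hv₂ he₂ hF₂
  have hU : (G.union H).TreewidthLE ((G.contractSeq S₁).treewidth + (R₁ ∪ R₂).card) := by
    refine (G.contractSeq S₁).treewidthLE_treewidth.add_verts (R₁ ∪ R₂) ?_ ?_
    · change G.verts ∪ H.verts = _
      rw [Finset.union_union_distrib_left, ← hv₁, ← hv₂]
    · intro x y hxy hx hy
      simp only [Finset.mem_union, not_or] at hx hy
      rcases hxy with h | h
      · exact he₁ x y h hx.1 hy.1
      · exact he₂ x y h hx.2 hy.2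
  have hR := Finset.card_union_le R₁ R₂
  have hle := hU.treewidth_le
  have hmin := le_min hF₁ hF₂
  omega
end

section
/- Let G_C be a graph with vertex set partitioned into color classes V_1, ..., V_k, and let G and H be constructed as follows. For each i ∈ [k], V_i' is V_i together with 4k^3 new extra vertices. For each edge e = uv of G_C with u ∈ V_i, v ∈ V_j (i ≠ j), create a new vertex z_e with edges u z_e and v z_e; Z_{ij} is the set of these z_e, and Z'_{ij} is Z_{ij} together with 4k^3 new extra vertices. For each i, add two nonadjacent vertices a_i and b_i, each adjacent to every vertex of V_i'. For each pair i < j, add two nonadjacent vertices c_{ij} and d_{ij}, each adjacent to every vertex of Z'_{ij}. This graph is G. The graph H has the same vertex set as G and edge set E(G) together with the edges a_i b_i for each i, and c_{ij} d_{ij}, a_i c_{ij}, a_j c_{ij} for each i < j. Then both G and H have degeneracy at most 4. -/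
/-- Vertex type of the degeneracy-4 reduction: the original vertices of `G_C`, the
`4k³` extra vertices of each `V_i'`, the subdivision vertices `z_e` (indexed by
unordered pairs), the `4k³` extra vertices of each `Z'_{ij}`, and the special
vertices `a_i, b_i, c_{ij}, d_{ij}` (the latter two indexed by unordered pairs, so
that `c_{ij} = c_{ji}` and `d_{ij} = d_{ji}`). -/
inductive MCVert (β : Type) (k : ℕ) : Type where
  | orig (u : β)
  | extraV (i : Fin k) (m : Fin (4 * k ^ 3))
  | zvert (e : Sym2 β)
  | extraZ (p : Sym2 (Fin k)) (m : Fin (4 * k ^ 3))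
  | av (i : Fin k)
  | bv (i : Fin k)
  | cv (p : Sym2 (Fin k))
  | dv (p : Sym2 (Fin k))

noncomputable instance (β : Type) (k : ℕ) : DecidableEq (MCVert β k) :=
  Classical.decEq _

/-- `u ∈ V_i` and `v ∈ V_j` are adjacent in `G_C` and lie in distinct color
classes. -/
def Cross {β : Type} (GC : LGraph β) {k : ℕ} (V : Fin k → Finset β)
    (u v : β) (i j : Fin k) : Prop :=
  GC.Adj u v ∧ u ∈ V i ∧ v ∈ V j ∧ i ≠ j

open scoped Classical in
/-- The common vertex set of the graphs `G` and `H` of the reduction. -/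
noncomputable def mccVerts {β : Type} (GC : LGraph β) (k : ℕ)
    (V : Fin k → Finset β) : Finset (MCVert β k) :=
  GC.verts.image MCVert.orig ∪
  (Finset.univ : Finset (Fin k × Fin (4 * k ^ 3))).image
    (fun q => MCVert.extraV q.1 q.2) ∪
  ((GC.verts ×ˢ GC.verts).filter
    (fun q => ∃ i j, Cross GC V q.1 q.2 i j)).image
      (fun q => MCVert.zvert s(q.1, q.2)) ∪
  (((Finset.univ : Finset (Sym2 (Fin k))).filter (fun p => ¬ p.IsDiag)) ×ˢ
    (Finset.univ : Finset (Fin (4 * k ^ 3)))).image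
      (fun q => MCVert.extraZ q.1 q.2) ∪
  Finset.univ.image MCVert.av ∪
  Finset.univ.image MCVert.bv ∪
  ((Finset.univ : Finset (Sym2 (Fin k))).filter (fun p => ¬ p.IsDiag)).image
    MCVert.cv ∪
  ((Finset.univ : Finset (Sym2 (Fin k))).filter (fun p => ¬ p.IsDiag)).image
    MCVert.dv

/-- The edges of the graph `G` of the reduction: `u – z_e – v` for each cross edge
`e = uv` of `G_C`; `a_i` and `b_i` adjacent to every vertex of `V_i'`; `c_{ij}` and
`d_{ij}` adjacent to every vertex of `Z'_{ij}`. -/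
def mccRel {β : Type} (GC : LGraph β) (k : ℕ) (V : Fin k → Finset β) :
    MCVert β k → MCVert β k → Prop := fun x y =>
  (∃ u v i j, Cross GC V u v i j ∧ x = MCVert.orig u ∧ y = MCVert.zvert s(u, v)) ∨
  (∃ i, (x = MCVert.av i ∨ x = MCVert.bv i) ∧
    ((∃ u ∈ V i, y = MCVert.orig u) ∨ ∃ m, y = MCVert.extraV i m)) ∨
  (∃ i j m, i ≠ j ∧ (x = MCVert.cv s(i, j) ∨ x = MCVert.dv s(i, j)) ∧
    y = MCVert.extraZ s(i, j) m) ∨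
  (∃ u v i j, Cross GC V u v i j ∧
    (x = MCVert.cv s(i, j) ∨ x = MCVert.dv s(i, j)) ∧ y = MCVert.zvert s(u, v))

/-- The edges of the graph `H` of the reduction: those of `G` together with
`a_i b_i`, `c_{ij} d_{ij}`, `a_i c_{ij}` and `a_j c_{ij}`. -/
def mccRelH {β : Type} (GC : LGraph β) (k : ℕ) (V : Fin k → Finset β) :
    MCVert β k → MCVert β k → Prop := fun x y =>
  mccRel GC k V x y ∨
  (∃ i, x = MCVert.av i ∧ y = MCVert.bv i) ∨
  (∃ i j, i ≠ j ∧ x = MCVert.cv s(i, j) ∧ y = MCVert.dv s(i, j)) ∨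
  (∃ i j, i ≠ j ∧ x = MCVert.av i ∧ y = MCVert.cv s(i, j))

/-- The graph `G` of the degeneracy-4 reduction. -/
noncomputable def mccG {β : Type} (GC : LGraph β) (k : ℕ)
    (V : Fin k → Finset β) : LGraph (MCVert β k) :=
  LGraph.mk' (mccVerts GC k V) (mccRel GC k V)

/-- The graph `H` of the degeneracy-4 reduction: same vertex set as `G`, with the
additional edges `a_i b_i`, `c_{ij} d_{ij}`, `a_i c_{ij}`, `a_j c_{ij}`. -/
noncomputable def mccH {β : Type} (GC : LGraph β) (k : ℕ)
    (V : Fin k → Finset β) : LGraph (MCVert β k) :=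
  LGraph.mk' (mccVerts GC k V) (mccRelH GC k V)

/-- A graph whose defining relation strictly increases a rank and has at most `d` predecessors at
each vertex is `d`-degenerate: a vertex of maximal rank in a set only sees predecessors there. -/
lemma LGraph.degenLE_of_rank {α : Type} (vs : Finset α) (r : α → α → Prop) (d : ℕ)
    (rank : α → ℕ) (hrank : ∀ x y, r x y → rank x < rank y)
    (hpred : ∀ y, ∃ N : Finset α, N.card ≤ d ∧ ∀ x, r x y → x ∈ N) :
    (LGraph.mk' vs r).DegenLE d := by
  intro S _ hne
  obtain ⟨x, hx, hmax⟩ := S.exists_max_image rank hne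
  obtain ⟨N, hN, hmem⟩ := hpred x
  refine ⟨x, hx, le_trans ?_ hN⟩
  rw [← Set.ncard_coe_finset N]
  refine Set.ncard_le_ncard ?_ N.finite_toSet
  rintro y ⟨hy, -, -, -, h | h⟩
  · exact absurd (hrank x y h) (not_lt.mpr (hmax y hy))
  · exact hmem y h

/-- The position of a vertex in the reverse of the elimination order for `H`. -/
def MCVert.rank {β : Type} {k : ℕ} : MCVert β k → ℕ
  | .av _ => 0
  | .cv _ => 1
  | .bv _ => 2
  | .dv _ => 2
  | .orig _ => 3
  | .extraV _ _ => 3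
  | .zvert _ => 4
  | .extraZ _ _ => 4

lemma mccRelH_rank_lt {β : Type} (GC : LGraph β) (k : ℕ) (V : Fin k → Finset β)
    (x y : MCVert β k) (h : mccRelH GC k V x y) : x.rank < y.rank := by
  rcases h with (⟨u, v, i, j, -, rfl, rfl⟩ | ⟨i, rfl | rfl, ⟨u, -, rfl⟩ | ⟨m, rfl⟩⟩ |
    ⟨i, j, m, -, rfl | rfl, rfl⟩ | ⟨u, v, i, j, -, rfl | rfl, rfl⟩) | ⟨i, rfl, rfl⟩ |
    ⟨i, j, -, rfl, rfl⟩ | ⟨i, j, -, rfl, rfl⟩ <;> simp [MCVert.rank]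

/-- Disjointness of the color classes makes the color of a vertex unique. -/
lemma color_unique {β : Type} {k : ℕ} {V : Fin k → Finset β}
    (hVdisj : ∀ i j, i ≠ j → Disjoint (V i) (V j)) {u : β} {i j : Fin k}
    (hi : u ∈ V i) (hj : u ∈ V j) : i = j := by
  by_contra hne
  exact Finset.disjoint_left.mp (hVdisj i j hne) hi hj

lemma mccRelH_predecessors {β : Type} (GC : LGraph β) (k : ℕ) (V : Fin k → Finset β)
    (hVdisj : ∀ i j, i ≠ j → Disjoint (V i) (V j)) (y : MCVert β k) :
    ∃ N : Finset (MCVert β k), N.card ≤ 4 ∧ ∀ x, mccRelH GC k V x y → x ∈ N := by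
  have pair (a b : MCVert β k) : ({a, b} : Finset (MCVert β k)).card ≤ 4 :=
    Finset.card_le_two.trans (by norm_num)
  cases y with
  | orig u =>
    by_cases hu : ∃ i, u ∈ V i
    · obtain ⟨i, hi⟩ := hu
      refine ⟨{.av i, .bv i}, pair _ _, fun x hx => ?_⟩
      simp only [mccRelH, mccRel, reduceCtorEq, and_false, exists_false, false_or, or_false,
        MCVert.orig.injEq] at hx
      obtain ⟨j, hx, w, hw, rfl⟩ := hx
      obtain rfl := color_unique hVdisj hi hw
      simpa using hx
    · refine ⟨∅, by simp, fun x hx => ?_⟩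
      simp only [mccRelH, mccRel, reduceCtorEq, and_false, exists_false, false_or, or_false,
        MCVert.orig.injEq] at hx
      obtain ⟨j, -, w, hw, rfl⟩ := hx
      exact absurd ⟨j, hw⟩ hu
  | extraV i m =>
    refine ⟨{.av i, .bv i}, pair _ _, fun x hx => ?_⟩
    simp only [mccRelH, mccRel, reduceCtorEq, and_false, exists_false, false_or, or_false,
      MCVert.extraV.injEq] at hx
    obtain ⟨j, hx, n, rfl, -⟩ := hx
    simpa using hx
  | zvert e =>
    by_cases he : ∃ u v i j, Cross GC V u v i j ∧ e = s(u, v)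
    · obtain ⟨u, v, i, j, ⟨-, hu, hv, -⟩, rfl⟩ := he
      refine ⟨{.orig u, .orig v, .cv s(i, j), .dv s(i, j)}, Finset.card_le_four, fun x hx => ?_⟩
      simp only [mccRelH, mccRel, reduceCtorEq, and_false, exists_false, false_or, or_false,
        MCVert.zvert.injEq] at hx
      rcases hx with ⟨u', v', i', j', -, rfl, h⟩ | ⟨u', v', i', j', ⟨-, hu', hv', -⟩, hx, h⟩
      · rcases Sym2.eq_iff.mp h with ⟨rfl, rfl⟩ | ⟨rfl, rfl⟩ <;> simp
      · -- The edge determines its unordered pair of colors.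
        have hij : s(i', j') = s(i, j) := by
          rcases Sym2.eq_iff.mp h with ⟨rfl, rfl⟩ | ⟨rfl, rfl⟩
          · rw [color_unique hVdisj hu hu', color_unique hVdisj hv hv']
          · rw [color_unique hVdisj hu hv', color_unique hVdisj hv hu', Sym2.eq_swap]
        rw [hij] at hx
        rcases hx with rfl | rfl <;> simp
    · refine ⟨∅, by simp, fun x hx => ?_⟩
      simp only [mccRelH, mccRel, reduceCtorEq, and_false, exists_false, false_or, or_false,
        MCVert.zvert.injEq] at hx
      rcases hx with ⟨u, v, i, j, h, -, h'⟩ | ⟨u, v, i, j, h, -, h'⟩ <;>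
        exact absurd ⟨u, v, i, j, h, h'⟩ he
  | extraZ p m =>
    refine ⟨{.cv p, .dv p}, pair _ _, fun x hx => ?_⟩
    simp only [mccRelH, mccRel, reduceCtorEq, and_false, exists_false, false_or, or_false,
      MCVert.extraZ.injEq] at hx
    obtain ⟨i, j, n, -, hx, rfl, -⟩ := hx
    simpa using hx
  | av i =>
    refine ⟨∅, by simp, fun x hx => ?_⟩
    simp [mccRelH, mccRel] at hx
  | bv i =>
    refine ⟨{.av i}, by simp, fun x hx => ?_⟩
    simpa [mccRelH, mccRel] using hx
  | cv p =>
    induction p with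
    | _ i j =>
      refine ⟨{.av i, .av j}, pair _ _, fun x hx => ?_⟩
      simp only [mccRelH, mccRel, reduceCtorEq, and_false, exists_false, false_or, or_false,
        MCVert.cv.injEq] at hx
      obtain ⟨i', j', -, rfl, h⟩ := hx
      rcases Sym2.eq_iff.mp h with ⟨rfl, rfl⟩ | ⟨rfl, rfl⟩ <;> simp
  | dv p =>
    refine ⟨{.cv p}, by simp, fun x hx => ?_⟩
    simp only [mccRelH, mccRel, reduceCtorEq, and_false, exists_false, false_or, or_false,
      MCVert.dv.injEq] at hx
    obtain ⟨i, j, -, rfl, rfl⟩ := hx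
    simp

/-- The graphs `G` and `H` of the reduction both have degeneracy
at most 4. -/
theorem mcc_degeneracy_le_four {β : Type} [DecidableEq β]
    (k : ℕ) (GC : LGraph β) (V : Fin k → Finset β)
    (hVsub : ∀ i, V i ⊆ GC.verts)
    (hVdisj : ∀ i j, i ≠ j → Disjoint (V i) (V j))
    (hVcover : ∀ x ∈ GC.verts, ∃ i, x ∈ V i) :
    (mccG GC k V).degeneracy ≤ 4 ∧ (mccH GC k V).degeneracy ≤ 4 := by
  refine ⟨Nat.sInf_le ?_, Nat.sInf_le ?_⟩
  · refine LGraph.degenLE_of_rank _ _ 4 MCVert.rank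
      (fun x y h => mccRelH_rank_lt GC k V x y (Or.inl h)) fun y => ?_
    obtain ⟨N, hN, hmem⟩ := mccRelH_predecessors GC k V hVdisj y
    exact ⟨N, hN, fun x h => hmem x (Or.inl h)⟩
  · exact LGraph.degenLE_of_rank _ _ 4 MCVert.rank
      (mccRelH_rank_lt GC k V) (mccRelH_predecessors GC k V hVdisj)
end
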